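/- Let 0 < λ < 1 and let ρ ∈ ℂ with Im ρ > 0 be such that both ρ and 1 − conj(ρ) are zeros of L(λ,λ,·). Then L(1−λ,1−λ,ρ) = 0. -/

import Mathlib

/-- The Dirichlet series of the Lerch zeta-function, convergent for `1 < re s`. -/
noncomputable def lerchSeries (lam alp : ℝ) (s : ℂ) : ℂ :=
  ∑' m : ℕ, Complex.exp (2 * Real.pi * Complex.I * lam * m) / ((m : ℂ) + alp) ^ s

/-- `F` is the analytic continuation of the Lerch zeta-function with parameters `lam`, `alp`:
it is complex differentiable away from `1` and agrees with the Dirichlet series on `1 < re s`. -/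
def IsLerch (lam alp : ℝ) (F : ℂ → ℂ) : Prop :=
  (∀ s : ℂ, s ≠ 1 → DifferentiableAt ℂ F s) ∧
  ∀ s : ℂ, 1 < s.re → F s = lerchSeries lam alp s

open scoped Classical

/-- The multiplicity (order of vanishing) of `F` at `z` (junk value `0` if `F` is not
analytic at `z` or vanishes to infinite order). -/
noncomputable def zeroOrder (F : ℂ → ℂ) (z : ℂ) : ℕ :=
  if h : AnalyticAt ℂ F z then (analyticOrderAt F z).toNat else 0

/-!
Up to a Gamma factor, Lerch's functional equation writes `L(-α, λ, 1 - s)` as a combination of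
`L(λ, α, s)` and `L(1 - λ, 1 - α, s)` with nowhere vanishing exponential coefficients. Moreover
`L(-α, λ, 1 - s)` is the complex conjugate of `L(α, λ, 1 - conj s)`. When `α = λ`, the two given
zeros kill two of the three terms at `s = ρ`, hence the third.

The functional equation is obtained by splitting the Lerch zeta-function into its even and odd parts
under `(λ, α) ↦ (1 - λ, 1 - α)`, twisted by `exp (2πiλ)`. Each part is, up to a Gamma factor, the
Mellin transform of a theta kernel, and the modularity of the Jacobi theta function exchanges
`(λ, α)` with `(-α, λ)`.
-/

section LerchZeta

open Complex Filter Topology Asymptotics Set HurwitzKernelBounds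
open scoped Real

/-! ### The two theta kernels -/

/-- The theta kernel `∑ n : ℤ, exp (2πian) exp (-π(n+b)²t)`, whose Mellin transform is the part of
the Lerch zeta-function that is even under `(a, b) ↦ (1 - a, 1 - b)`, up to a factor
`exp (2πia)`. -/
noncomputable def lerchEvenKernel (a b t : ℝ) : ℂ :=
  cexp (-π * b ^ 2 * t) * jacobiTheta₂ (a + b * I * t) (I * t)

/-- The theta kernel `∑ n : ℤ, exp (2πian) (n+b) exp (-π(n+b)²t)`, whose Mellin transform is the
part of the Lerch zeta-function that is odd under `(a, b) ↦ (1 - a, 1 - b)`, up to a factor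
`exp (2πia)`. -/
noncomputable def lerchOddKernel (a b t : ℝ) : ℂ :=
  cexp (-π * b ^ 2 * t) * (jacobiTheta₂' (a + b * I * t) (I * t) / (2 * π * I)
    + b * jacobiTheta₂ (a + b * I * t) (I * t))

lemma hasSum_int_lerchEvenKernel (a b : ℝ) {t : ℝ} (ht : 0 < t) :
    HasSum (fun n : ℤ ↦ cexp (2 * π * I * a * n) * Real.exp (-π * (n + b) ^ 2 * t))
      (lerchEvenKernel a b t) := by
  refine ((hasSum_jacobiTheta₂_term (a + b * I * t) (τ := I * t) (by simpa)).mul_left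
    (cexp (-π * b ^ 2 * t))).congr_fun fun n ↦ ?_
  rw [jacobiTheta₂_term, ← Complex.exp_add]
  push_cast
  rw [← Complex.exp_add]
  congr 1
  linear_combination - (2 * π * n * b * t + π * n ^ 2 * t : ℂ) * I_sq

lemma hasSum_int_lerchOddKernel (a b : ℝ) {t : ℝ} (ht : 0 < t) :
    HasSum (fun n : ℤ ↦ cexp (2 * π * I * a * n) * ((n + b : ℝ) : ℂ) *
      Real.exp (-π * (n + b) ^ 2 * t)) (lerchOddKernel a b t) := by
  have hθ := hasSum_jacobiTheta₂_term (a + b * I * t) (τ := I * t) (by simpa)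
  have hθ' := hasSum_jacobiTheta₂'_term (a + b * I * t) (τ := I * t) (by simpa)
  refine (((hθ'.div_const (2 * π * I)).add (hθ.mul_left ↑b)).mul_left
    (cexp (-π * b ^ 2 * t))).congr_fun fun n ↦ ?_
  rw [jacobiTheta₂'_term, mul_assoc (2 * π * I) (n : ℂ), mul_div_cancel_left₀ _ two_pi_I_ne_zero,
    ← add_mul, mul_left_comm, jacobiTheta₂_term, ← Complex.exp_add]
  push_cast
  rw [mul_right_comm, ← Complex.exp_add, mul_comm]
  congr 2
  linear_combination - (2 * π * n * b * t + π * n ^ 2 * t : ℂ) * I_sq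

lemma continuousOn_lerchEvenKernel (a b : ℝ) : ContinuousOn (lerchEvenKernel a b) (Ioi 0) := by
  refine continuousOn_of_forall_continuousAt fun t ht ↦ .mul (by fun_prop) ?_
  exact (continuousAt_jacobiTheta₂ (a + b * I * t) <| by simpa).comp
    (f := fun u : ℝ ↦ (a + b * I * u, I * u)) (by fun_prop)

lemma continuousOn_lerchOddKernel (a b : ℝ) : ContinuousOn (lerchOddKernel a b) (Ioi 0) := by
  refine continuousOn_of_forall_continuousAt fun t ht ↦ .mul (by fun_prop) (.add ?_ (.mul ?_ ?_))
  · exact ((continuousAt_jacobiTheta₂' (a + b * I * t) <| by simpa).comp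
      (f := fun u : ℝ ↦ (a + b * I * u, I * u)) (by fun_prop)).div_const _
  · exact continuousAt_const
  · exact (continuousAt_jacobiTheta₂ (a + b * I * t) <| by simpa).comp
      (f := fun u : ℝ ↦ (a + b * I * u, I * u)) (by fun_prop)

lemma norm_exp_two_pi_I_mul_ofReal_mul_intCast (a : ℝ) (n : ℤ) :
    ‖cexp (2 * π * I * a * n)‖ = 1 := by
  simp [Complex.norm_exp]

lemma hasSum_f_int (k : ℕ) (b : ℝ) {t : ℝ} (ht : 0 < t) :
    HasSum (f_int k b t) (F_int k b t) := by
  simpa only [F_int, Function.Periodic.lift_coe] using (summable_f_int k b ht).hasSum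

lemma norm_lerchEvenKernel_le (a b : ℝ) {t : ℝ} (ht : 0 < t) :
    ‖lerchEvenKernel a b t‖ ≤ F_int 0 b t := by
  rw [← (hasSum_int_lerchEvenKernel a b ht).tsum_eq]
  refine tsum_of_norm_bounded (hasSum_f_int 0 b ht) fun n ↦ le_of_eq ?_
  simp only [norm_mul, norm_exp_two_pi_I_mul_ofReal_mul_intCast, norm_real, Real.norm_eq_abs,
    Real.abs_exp, f_int, pow_zero]

lemma norm_lerchOddKernel_le (a b : ℝ) {t : ℝ} (ht : 0 < t) :
    ‖lerchOddKernel a b t‖ ≤ F_int 1 b t := by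
  rw [← (hasSum_int_lerchOddKernel a b ht).tsum_eq]
  refine tsum_of_norm_bounded (hasSum_f_int 1 b ht) fun n ↦ le_of_eq ?_
  simp only [norm_mul, norm_exp_two_pi_I_mul_ofReal_mul_intCast, norm_real, Real.norm_eq_abs,
    Real.abs_exp, f_int, pow_one, one_mul]

lemma isBigO_atTop_rpow_of_norm_le {f : ℝ → ℂ} {g : ℝ → ℝ} {p : ℝ} (hp : 0 < p)
    (hfg : ∀ t > 0, ‖f t‖ ≤ g t) (hg : g =O[atTop] fun t ↦ Real.exp (-p * t)) (r : ℝ) :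
    f =O[atTop] (· ^ r) := by
  refine .trans (.of_bound' ?_) (hg.trans (isLittleO_exp_neg_mul_rpow_atTop hp r).isBigO)
  filter_upwards [eventually_gt_atTop 0] with t ht using (hfg t ht).trans (le_abs_self _)

lemma isBigO_atTop_lerchEvenKernel (a : ℝ) {b : ℝ} (hb : (b : UnitAddCircle) ≠ 0) (r : ℝ) :
    lerchEvenKernel a b =O[atTop] (· ^ r) := by
  obtain ⟨p, hp, hF⟩ := isBigO_atTop_F_int_zero_sub (b : UnitAddCircle)
  simp only [hb, if_false, sub_zero] at hF
  exact isBigO_atTop_rpow_of_norm_le hp (fun t ht ↦ norm_lerchEvenKernel_le a b ht) hF r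

lemma isBigO_atTop_lerchOddKernel (a b r : ℝ) : lerchOddKernel a b =O[atTop] (· ^ r) := by
  obtain ⟨p, hp, hF⟩ := isBigO_atTop_F_int_one (b : UnitAddCircle)
  exact isBigO_atTop_rpow_of_norm_le hp (fun t ht ↦ norm_lerchOddKernel_le a b ht) hF r

/-! ### Transformation of the kernels under inversion and reflection -/

lemma div_I_mul_inv (z x : ℂ) : z / (I * x⁻¹) = -(I * x * z) := by
  rw [div_eq_mul_inv, mul_inv, inv_inv, inv_I]
  ring

lemma one_div_neg_I_mul_I_mul_inv_cpow {x : ℝ} (hx : 0 < x) :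
    1 / (-I * (I * (x : ℂ)⁻¹)) ^ (1 / 2 : ℂ) = ↑(x ^ (1 / 2 : ℝ)) := by
  have harg : arg x ≠ π := by
    rw [arg_ofReal_of_nonneg hx.le]
    exact Real.pi_ne_zero.symm
  rw [← mul_assoc, neg_mul, I_mul_I, neg_neg, one_mul, inv_cpow _ _ harg, one_div (_ ^ _)⁻¹,
    inv_inv, ofReal_cpow hx.le]
  norm_num

lemma jacobiTheta₂_I_mul_inv (z : ℂ) {x : ℝ} (hx : 0 < x) :
    jacobiTheta₂ z (I * (x : ℂ)⁻¹) =
      ↑(x ^ (1 / 2 : ℝ)) * cexp (-π * x * z ^ 2) * jacobiTheta₂ (I * x * z) (I * x) := by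
  have hexp : -(I * x * (-π * I * z ^ 2)) = -π * x * z ^ 2 := by
    linear_combination π * x * z ^ 2 * I_sq
  rw [jacobiTheta₂_functional_equation, one_div_neg_I_mul_I_mul_inv_cpow hx]
  simp only [div_I_mul_inv, hexp, mul_neg, mul_one, neg_neg, jacobiTheta₂_neg_left]

lemma jacobiTheta₂'_I_mul_inv (z : ℂ) {x : ℝ} (hx : 0 < x) :
    jacobiTheta₂' z (I * (x : ℂ)⁻¹) =
      ↑(x ^ (1 / 2 : ℝ)) * cexp (-π * x * z ^ 2) * (I * x) *
        (jacobiTheta₂' (I * x * z) (I * x) + 2 * π * I * z * jacobiTheta₂ (I * x * z) (I * x)) := by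
  have hexp : -(I * x * (-π * I * z ^ 2)) = -π * x * z ^ 2 := by
    linear_combination π * x * z ^ 2 * I_sq
  rw [jacobiTheta₂'_functional_equation, one_div_neg_I_mul_I_mul_inv_cpow hx]
  simp only [div_I_mul_inv, hexp, mul_neg, mul_one, neg_neg, jacobiTheta₂_neg_left,
    jacobiTheta₂'_neg_left]
  ring

lemma exp_mul_exp_neg_pi_mul_sq (a b : ℂ) {x : ℂ} (hx : x ≠ 0) :
    cexp (-π * b ^ 2 * x⁻¹) * cexp (-π * x * (a + b * I * x⁻¹) ^ 2) =
      cexp (-2 * π * I * a * b) * cexp (-π * a ^ 2 * x) := by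
  rw [← Complex.exp_add, ← Complex.exp_add]
  congr 1
  field_simp
  linear_combination (-b ^ 2) * I_sq

lemma I_mul_mul_add_mul_I_mul_inv (a b : ℂ) {x : ℂ} (hx : x ≠ 0) :
    I * x * (a + b * I * x⁻¹) = -b + a * I * x := by
  field_simp
  linear_combination b * I_sq

lemma lerchEvenKernel_one_div (a b : ℝ) {x : ℝ} (hx : 0 < x) :
    lerchEvenKernel a b (1 / x) =
      cexp (-2 * π * I * a * b) * ↑(x ^ (1 / 2 : ℝ)) * lerchEvenKernel (-b) a x := by
  have hx0 : (x : ℂ) ≠ 0 := ofReal_ne_zero.mpr hx.ne'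
  have hz := I_mul_mul_add_mul_I_mul_inv a b hx0
  have hexp := exp_mul_exp_neg_pi_mul_sq a b hx0
  rw [lerchEvenKernel, lerchEvenKernel, one_div x, ofReal_inv, jacobiTheta₂_I_mul_inv _ hx, hz,
    ofReal_neg]
  linear_combination
    ↑(x ^ (1 / 2 : ℝ)) * jacobiTheta₂ (-b + a * I * x) (I * x) * hexp

lemma lerchOddKernel_one_div (a b : ℝ) {x : ℝ} (hx : 0 < x) :
    lerchOddKernel a b (1 / x) =
      I * cexp (-2 * π * I * a * b) * ↑(x ^ (3 / 2 : ℝ)) * lerchOddKernel (-b) a x := by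
  have hx0 : (x : ℂ) ≠ 0 := ofReal_ne_zero.mpr hx.ne'
  have hz := I_mul_mul_add_mul_I_mul_inv a b hx0
  have hexp := exp_mul_exp_neg_pi_mul_sq a b hx0
  have hpow : x ^ (3 / 2 : ℝ) = x ^ (1 / 2 : ℝ) * x := by
    rw [← Real.rpow_add_one hx.ne']
    norm_num
  have hcombine (T T' : ℂ) : I * x * (T' + 2 * π * I * (a + b * I * (x : ℂ)⁻¹) * T) / (2 * π * I) +
      b * T = I * x * (T' / (2 * π * I) + a * T) := by
    rw [mul_div_assoc, add_div, mul_assoc (2 * π * I), mul_div_cancel_left₀ _ two_pi_I_ne_zero]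
    linear_combination I ^ 2 * b * T * mul_inv_cancel₀ hx0 + b * T * I_sq
  rw [lerchOddKernel, lerchOddKernel, one_div x, ofReal_inv, jacobiTheta₂_I_mul_inv _ hx,
    jacobiTheta₂'_I_mul_inv _ hx, hz, ofReal_neg, hpow, ofReal_mul]
  set T := jacobiTheta₂ (-b + a * I * x) (I * x)
  set T' := jacobiTheta₂' (-b + a * I * x) (I * x)
  linear_combination
    ↑(x ^ (1 / 2 : ℝ)) * cexp (-π * b ^ 2 * (x : ℂ)⁻¹) *
      cexp (-π * x * (a + b * I * (x : ℂ)⁻¹) ^ 2) * hcombine T T' +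
    ↑(x ^ (1 / 2 : ℝ)) * (I * x) * (T' / (2 * π * I) + a * T) * hexp

lemma jacobiTheta₂_one_sub_add_one_sub_mul (a b τ : ℂ) :
    jacobiTheta₂ (1 - a + (1 - b) * τ) τ =
      cexp (-π * I * (τ - 2 * (a + b * τ))) * jacobiTheta₂ (a + b * τ) τ := by
  rw [show 1 - a + (1 - b) * τ = -(a + b * τ) + τ + 1 by ring, jacobiTheta₂_add_left,
    jacobiTheta₂_add_left', jacobiTheta₂_neg_left]
  ring_nf

lemma jacobiTheta₂'_one_sub_add_one_sub_mul (a b τ : ℂ) :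
    jacobiTheta₂' (1 - a + (1 - b) * τ) τ = -cexp (-π * I * (τ - 2 * (a + b * τ))) *
      (jacobiTheta₂' (a + b * τ) τ + 2 * π * I * jacobiTheta₂ (a + b * τ) τ) := by
  rw [show 1 - a + (1 - b) * τ = -(a + b * τ) + τ + 1 by ring, jacobiTheta₂'_add_left,
    jacobiTheta₂'_add_left', jacobiTheta₂_neg_left, jacobiTheta₂'_neg_left]
  ring_nf

lemma exp_neg_pi_mul_one_sub_sq_mul_exp (a b t : ℂ) :
    cexp (-π * (1 - b) ^ 2 * t) * cexp (-π * I * (I * t - 2 * (a + b * (I * t)))) =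
      cexp (2 * π * I * a) * cexp (-π * b ^ 2 * t) := by
  rw [← Complex.exp_add, ← Complex.exp_add]
  congr 1
  linear_combination π * t * (2 * b - 1) * I_sq

lemma lerchEvenKernel_one_sub_one_sub (a b t : ℝ) :
    lerchEvenKernel (1 - a) (1 - b) t = cexp (2 * π * I * a) * lerchEvenKernel a b t := by
  have hexp := exp_neg_pi_mul_one_sub_sq_mul_exp a b t
  simp only [lerchEvenKernel, mul_assoc _ I (t : ℂ), ofReal_sub, ofReal_one,
    jacobiTheta₂_one_sub_add_one_sub_mul]
  linear_combination jacobiTheta₂ (a + b * (I * t)) (I * t) * hexp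

lemma lerchOddKernel_one_sub_one_sub (a b t : ℝ) :
    lerchOddKernel (1 - a) (1 - b) t = -cexp (2 * π * I * a) * lerchOddKernel a b t := by
  have hexp := exp_neg_pi_mul_one_sub_sq_mul_exp a b t
  simp only [lerchOddKernel, mul_assoc _ I (t : ℂ), ofReal_sub, ofReal_one,
    jacobiTheta₂_one_sub_add_one_sub_mul, jacobiTheta₂'_one_sub_add_one_sub_mul]
  rw [mul_div_assoc, add_div, mul_div_cancel_left₀ _ two_pi_I_ne_zero]
  linear_combination -(jacobiTheta₂' (a + b * (I * t)) (I * t) / (2 * π * I) +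
    b * jacobiTheta₂ (a + b * (I * t)) (I * t)) * hexp

/-! ### The completed functions -/

/-- The functional equation of the even kernel under `t ↦ 1 / t`, packaged for the Mellin
transform. -/
noncomputable def lerchEvenFEPair {a b : ℝ} (ha : (a : UnitAddCircle) ≠ 0)
    (hb : (b : UnitAddCircle) ≠ 0) : WeakFEPair ℂ where
  f := lerchEvenKernel a b
  g := lerchEvenKernel (-b) a
  hf_int := (continuousOn_lerchEvenKernel a b).locallyIntegrableOn measurableSet_Ioi
  hg_int := (continuousOn_lerchEvenKernel (-b) a).locallyIntegrableOn measurableSet_Ioi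
  k := 1 / 2
  hk := one_half_pos
  ε := cexp (-2 * π * I * a * b)
  hε := Complex.exp_ne_zero _
  f₀ := 0
  g₀ := 0
  hf_top r := by simpa only [sub_zero] using isBigO_atTop_lerchEvenKernel a hb r
  hg_top r := by simpa only [sub_zero] using isBigO_atTop_lerchEvenKernel (-b) ha r
  h_feq _ hx := lerchEvenKernel_one_div a b hx

/-- The functional equation of the odd kernel under `t ↦ 1 / t`, packaged for the Mellin
transform. -/
noncomputable def lerchOddFEPair (a b : ℝ) : WeakFEPair ℂ where
  f := lerchOddKernel a b
  g := lerchOddKernel (-b) a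
  hf_int := (continuousOn_lerchOddKernel a b).locallyIntegrableOn measurableSet_Ioi
  hg_int := (continuousOn_lerchOddKernel (-b) a).locallyIntegrableOn measurableSet_Ioi
  k := 3 / 2
  hk := by norm_num
  ε := I * cexp (-2 * π * I * a * b)
  hε := mul_ne_zero I_ne_zero (Complex.exp_ne_zero _)
  f₀ := 0
  g₀ := 0
  hf_top r := by simpa only [sub_zero] using isBigO_atTop_lerchOddKernel a b r
  hg_top r := by simpa only [sub_zero] using isBigO_atTop_lerchOddKernel (-b) a r
  h_feq _ hx := lerchOddKernel_one_div a b hx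

lemma isStrongFEPair_lerchEvenFEPair {a b : ℝ} (ha : (a : UnitAddCircle) ≠ 0)
    (hb : (b : UnitAddCircle) ≠ 0) : IsStrongFEPair (lerchEvenFEPair ha hb) :=
  ⟨rfl, rfl⟩

lemma isStrongFEPair_lerchOddFEPair (a b : ℝ) : IsStrongFEPair (lerchOddFEPair a b) :=
  ⟨rfl, rfl⟩

/-- The even part of the Lerch zeta-function, completed by the factor `Gammaℝ s`. -/
noncomputable def completedLerchZetaEven (a b : ℝ) (s : ℂ) : ℂ :=
  mellin (lerchEvenKernel a b) (s / 2)

/-- The odd part of the Lerch zeta-function, completed by the factor `Gammaℝ (s + 1)`. -/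
noncomputable def completedLerchZetaOdd (a b : ℝ) (s : ℂ) : ℂ :=
  mellin (lerchOddKernel a b) ((s + 1) / 2)

lemma differentiable_completedLerchZetaEven {a b : ℝ} (ha : (a : UnitAddCircle) ≠ 0)
    (hb : (b : UnitAddCircle) ≠ 0) : Differentiable ℂ (completedLerchZetaEven a b) := by
  have h := isStrongFEPair_lerchEvenFEPair ha hb
  exact (h.Λ_eq ▸ h.differentiable_Λ).comp (differentiable_id.div_const 2)

lemma differentiable_completedLerchZetaOdd (a b : ℝ) :
    Differentiable ℂ (completedLerchZetaOdd a b) := by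
  have h := isStrongFEPair_lerchOddFEPair a b
  exact (h.Λ_eq ▸ h.differentiable_Λ).comp ((differentiable_id.add_const 1).div_const 2)

lemma completedLerchZetaEven_one_sub {a b : ℝ} (ha : (a : UnitAddCircle) ≠ 0)
    (hb : (b : UnitAddCircle) ≠ 0) (s : ℂ) :
    completedLerchZetaEven (-b) a (1 - s) =
      cexp (2 * π * I * a * b) * completedLerchZetaEven a b s := by
  have h := isStrongFEPair_lerchEvenFEPair ha hb
  have feq := (lerchEvenFEPair ha hb).functional_equation ((1 - s) / 2)
  have hs : ((1 / 2 : ℝ) : ℂ) - (1 - s) / 2 = s / 2 := by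
    push_cast
    ring
  rw [h.Λ_eq, h.symm.Λ_eq] at feq
  simp only [lerchEvenFEPair, WeakFEPair.symm, hs, smul_eq_mul, neg_mul, Complex.exp_neg] at feq
  rw [completedLerchZetaEven, completedLerchZetaEven, feq,
    mul_inv_cancel_left₀ (Complex.exp_ne_zero _)]

lemma completedLerchZetaOdd_one_sub (a b : ℝ) (s : ℂ) :
    completedLerchZetaOdd (-b) a (1 - s) =
      -I * cexp (2 * π * I * a * b) * completedLerchZetaOdd a b s := by
  have h := isStrongFEPair_lerchOddFEPair a b
  have feq := (lerchOddFEPair a b).functional_equation ((1 - s + 1) / 2)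
  have hs : ((3 / 2 : ℝ) : ℂ) - (1 - s + 1) / 2 = (s + 1) / 2 := by
    push_cast
    ring
  rw [h.Λ_eq, h.symm.Λ_eq] at feq
  simp only [lerchOddFEPair, WeakFEPair.symm, hs, smul_eq_mul, neg_mul, Complex.exp_neg] at feq
  rw [completedLerchZetaOdd, completedLerchZetaOdd, feq]
  field_simp
  rw [I_sq, mul_neg_one, neg_neg]

lemma completedLerchZetaEven_one_sub_one_sub (a b : ℝ) (s : ℂ) :
    completedLerchZetaEven (1 - a) (1 - b) s =
      cexp (2 * π * I * a) * completedLerchZetaEven a b s := by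
  simp only [completedLerchZetaEven, funext (lerchEvenKernel_one_sub_one_sub a b),
    ← smul_eq_mul (cexp _), mellin_const_smul]

lemma completedLerchZetaOdd_one_sub_one_sub (a b : ℝ) (s : ℂ) :
    completedLerchZetaOdd (1 - a) (1 - b) s =
      -cexp (2 * π * I * a) * completedLerchZetaOdd a b s := by
  simp only [completedLerchZetaOdd, funext (lerchOddKernel_one_sub_one_sub a b),
    ← smul_eq_mul (-cexp _), mellin_const_smul]

/-! ### The Lerch zeta-function -/

/-- The analytic continuation of the Lerch zeta-function for `a ∉ ℤ` and `0 < b < 1`.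
At the poles of a Gamma factor the convention `x / 0 = 0` gives the correct value, the reciprocal
of the Gamma factor being entire with a zero there. -/
noncomputable def lerchZeta (a b : ℝ) (s : ℂ) : ℂ :=
  (completedLerchZetaEven a b s / Gammaℝ s + completedLerchZetaOdd a b s / Gammaℝ (s + 1)) / 2

lemma differentiable_lerchZeta {a b : ℝ} (ha : (a : UnitAddCircle) ≠ 0)
    (hb : (b : UnitAddCircle) ≠ 0) : Differentiable ℂ (lerchZeta a b) := by
  unfold lerchZeta
  simp only [div_eq_mul_inv _ (Gammaℝ _)]
  exact (((differentiable_completedLerchZetaEven ha hb).mul differentiable_Gammaℝ_inv).add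
    ((differentiable_completedLerchZetaOdd a b).mul
      (differentiable_Gammaℝ_inv.comp (differentiable_id.add_const 1)))).div_const 2

lemma coe_unitAddCircle_ne_zero {b : ℝ} (hb : b ∈ Ioo 0 1) : (b : UnitAddCircle) ≠ 0 := by
  rw [Ne, AddCircle.coe_eq_zero_iff_of_mem_Ico (Ioo_subset_Ico_self hb)]
  exact hb.1.ne'

lemma summable_norm_exp_div_abs_add_rpow (a b : ℝ) {r : ℝ} (hr : 1 < r) :
    Summable fun n : ℤ ↦ ‖cexp (2 * π * I * a * n)‖ / |(n : ℝ) + b| ^ r := by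
  simpa only [norm_exp_two_pi_I_mul_ofReal_mul_intCast, Real.summable_one_div_int_add_rpow] using hr

lemma hasSum_int_completedLerchZetaEven (a : ℝ) {b : ℝ} (hb : (b : UnitAddCircle) ≠ 0) {s : ℂ}
    (hs : 1 < s.re) :
    HasSum (fun n : ℤ ↦ Gammaℝ s * cexp (2 * π * I * a * n) / ↑|n + b| ^ s)
      (completedLerchZetaEven a b s) := by
  have hnb (n : ℤ) : (n : ℝ) + b ≠ 0 := fun h ↦ hb <| by
    rw [AddCircle.coe_eq_zero_iff]
    exact ⟨-n, by simp only [zsmul_eq_mul, Int.cast_neg, mul_one]; linarith⟩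
  refine hasSum_mellin_pi_mul_sq (zero_lt_one.trans hs) (fun t ht ↦ ?_)
    (summable_norm_exp_div_abs_add_rpow a b hs)
  simpa only [hnb, if_false] using hasSum_int_lerchEvenKernel a b ht

lemma hasSum_int_completedLerchZetaOdd (a b : ℝ) {s : ℂ} (hs : 1 < s.re) :
    HasSum (fun n : ℤ ↦ Gammaℝ (s + 1) * cexp (2 * π * I * a * n) *
      SignType.sign (n + b) / ↑|n + b| ^ s) (completedLerchZetaOdd a b s) :=
  hasSum_mellin_pi_mul_sq' (zero_lt_one.trans hs)
    (fun _ ht ↦ hasSum_int_lerchOddKernel a b ht) (summable_norm_exp_div_abs_add_rpow a b hs)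

lemma hasSum_lerchZeta (a : ℝ) {b : ℝ} (hb : b ∈ Ioo 0 1) {s : ℂ} (hs : 1 < s.re) :
    HasSum (fun m : ℕ ↦ cexp (2 * π * I * a * m) / ((m : ℂ) + b) ^ s) (lerchZeta a b s) := by
  have hΓ : Gammaℝ s ≠ 0 := Gammaℝ_ne_zero_of_re_pos (zero_lt_one.trans hs)
  have hΓ' : Gammaℝ (s + 1) ≠ 0 := Gammaℝ_ne_zero_of_re_pos <| by
    rw [add_re, one_re]
    linarith
  have hsum := (((hasSum_int_completedLerchZetaEven a
    (coe_unitAddCircle_ne_zero hb) hs).div_const (Gammaℝ s)).add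
      ((hasSum_int_completedLerchZetaOdd a b hs).div_const (Gammaℝ (s + 1)))).div_const 2
  refine ((Nat.cast_injective.hasSum_iff fun n hn ↦ ?_).mpr hsum).congr_fun fun m ↦ ?_
  · have hneg : (n : ℝ) + b < 0 := by
      have hn0 : n < 0 := by
        contrapose! hn
        exact ⟨n.toNat, Int.toNat_of_nonneg hn⟩
      have hn1 : (n : ℝ) ≤ -1 := mod_cast Int.le_sub_one_of_lt hn0
      linarith [hb.2]
    rw [sign_neg hneg]
    field_simp
    simp
  · have hpos : 0 < ((m : ℤ) : ℝ) + b := by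
      rw [Int.cast_natCast]
      exact add_pos_of_nonneg_of_pos m.cast_nonneg hb.1
    simp only [Function.comp_apply]
    rw [sign_pos hpos, abs_of_pos hpos]
    field_simp
    push_cast
    rw [SignType.coe_one]
    ring

/-! ### Uniqueness of the continuation and the functional equation -/

lemma eq_of_differentiableAt_ne_of_eq_of_lt_re {E : Type*} [NormedAddCommGroup E]
    [NormedSpace ℂ E] [CompleteSpace E] {u v : ℂ → E} {p : ℂ} {c : ℝ}
    (hu : ∀ s ≠ p, DifferentiableAt ℂ u s) (hv : ∀ s ≠ p, DifferentiableAt ℂ v s)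
    (huv : ∀ s : ℂ, c < s.re → u s = v s) {s : ℂ} (hs : s ≠ p) : u s = v s := by
  have hanalytic {w : ℂ → E} (hw : ∀ s ≠ p, DifferentiableAt ℂ w s) : AnalyticOnNhd ℂ w {p}ᶜ :=
    DifferentiableOn.analyticOnNhd (fun z hz ↦ (hw z hz).differentiableWithinAt)
      isOpen_compl_singleton
  have hconn : IsPreconnected ({p}ᶜ : Set ℂ) :=
    (isConnected_compl_singleton_of_one_lt_rank (by simp) p).isPreconnected
  obtain ⟨x, hcx, hpx⟩ : ∃ x : ℝ, c < x ∧ p.re < x :=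
    (exists_gt (max c p.re)).imp fun _ ↦ max_lt_iff.mp
  have hx : (x : ℂ) ∈ ({p}ᶜ : Set ℂ) := by
    rintro rfl
    exact hpx.ne rfl
  have hev : u =ᶠ[𝓝 (x : ℂ)] v := by
    have hopen : IsOpen {z : ℂ | c < z.re} := isOpen_lt continuous_const continuous_re
    filter_upwards [hopen.mem_nhds hcx] with z hz using huv z hz
  exact (hanalytic hu).eqOn_of_preconnected_of_eventuallyEq (hanalytic hv) hconn hx hev hs

lemma isLerch_lerchZeta {a b : ℝ} (ha : (a : UnitAddCircle) ≠ 0) (hb : b ∈ Ioo 0 1) :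
    IsLerch a b (lerchZeta a b) :=
  ⟨fun s _ ↦ differentiable_lerchZeta ha (coe_unitAddCircle_ne_zero hb) s,
    fun _ hs ↦ (hasSum_lerchZeta a hb hs).tsum_eq.symm⟩

lemma IsLerch.eq_lerchZeta {a b : ℝ} {F : ℂ → ℂ} (hF : IsLerch a b F)
    (ha : (a : UnitAddCircle) ≠ 0) (hb : b ∈ Ioo 0 1) {s : ℂ} (hs : s ≠ 1) :
    F s = lerchZeta a b s := by
  have hL := isLerch_lerchZeta ha hb
  exact eq_of_differentiableAt_ne_of_eq_of_lt_re hF.1 hL.1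
    (fun z hz ↦ (hF.2 z hz).trans (hL.2 z hz).symm) hs

lemma IsLerch.conj {a b : ℝ} {F : ℂ → ℂ} (hF : IsLerch a b F) (hb : 0 ≤ b) :
    IsLerch (-a) b fun s ↦ (starRingEnd ℂ) (F ((starRingEnd ℂ) s)) := by
  refine ⟨fun s hs ↦ ?_, fun s hs ↦ ?_⟩
  · have hs' : (starRingEnd ℂ) s ≠ 1 := by simpa using (starRingEnd ℂ).injective.ne hs
    simpa only [conj_conj, Function.comp_def] using (hF.1 _ hs').conj_conj
  · simp only [hF.2 _ ((conj_re s).symm ▸ hs), lerchSeries, conj_tsum]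
    refine tsum_congr fun m ↦ ?_
    have harg : arg (m + b) ≠ π := by
      rw [← ofReal_natCast, ← ofReal_add, arg_ofReal_of_nonneg (by positivity)]
      exact Real.pi_ne_zero.symm
    rw [map_div₀, ← Complex.exp_conj, ← conj_cpow _ _ harg]
    simp [conj_ofNat]

lemma exp_mul_lerchZeta_one_sub_one_sub (a b : ℝ) (s : ℂ) :
    cexp (-2 * π * I * a) * lerchZeta (1 - a) (1 - b) s =
      (completedLerchZetaEven a b s / Gammaℝ s -
        completedLerchZetaOdd a b s / Gammaℝ (s + 1)) / 2 := by
  have hexp : cexp (-2 * π * I * a) * cexp (2 * π * I * a) = 1 := by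
    rw [← Complex.exp_add, ← Complex.exp_zero]
    ring_nf
  rw [lerchZeta, completedLerchZetaEven_one_sub_one_sub, completedLerchZetaOdd_one_sub_one_sub]
  linear_combination (completedLerchZetaEven a b s / Gammaℝ s -
    completedLerchZetaOdd a b s / Gammaℝ (s + 1)) / 2 * hexp

lemma inv_Gammaℂ_mul_inv_Gammaℝ_one_sub (s : ℂ) :
    (Gammaℂ s)⁻¹ * (Gammaℝ (1 - s))⁻¹ = Complex.cos (π * s / 2) * (Gammaℝ s)⁻¹ := by
  rw [← Gammaℝ_mul_Gammaℝ_add_one, mul_inv, mul_assoc, ← mul_inv, mul_comm (Gammaℝ (s + 1)),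
    add_comm s, Gammaℝ_one_sub_mul_Gammaℝ_one_add, inv_inv, mul_comm]

lemma inv_Gammaℂ_mul_inv_Gammaℝ_two_sub (s : ℂ) :
    (Gammaℂ s)⁻¹ * (Gammaℝ (1 - s + 1))⁻¹ = Complex.sin (π * s / 2) * (Gammaℝ (s + 1))⁻¹ := by
  have h := Gammaℝ_one_sub_mul_Gammaℝ_one_add (1 - s)
  rw [sub_sub_cancel, mul_sub, mul_one, sub_div, Complex.cos_pi_div_two_sub, add_comm 1] at h
  rw [← Gammaℝ_mul_Gammaℝ_add_one, mul_inv, mul_right_comm, ← mul_inv, h, inv_inv]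

/-- Lerch's functional equation, with the Gamma factor inverted so that it holds for all `s`. -/
lemma lerchZeta_one_sub {a b : ℝ} (ha : (a : UnitAddCircle) ≠ 0) (hb : (b : UnitAddCircle) ≠ 0)
    (s : ℂ) :
    (Gammaℂ s)⁻¹ * lerchZeta (-b) a (1 - s) = cexp (2 * π * I * a * b) / 2 *
      (cexp (-π * I * s / 2) * lerchZeta a b s +
        cexp (π * I * s / 2) * (cexp (-2 * π * I * a) * lerchZeta (1 - a) (1 - b) s)) := by
  have hcos := inv_Gammaℂ_mul_inv_Gammaℝ_one_sub s
  have hsin := inv_Gammaℂ_mul_inv_Gammaℝ_two_sub s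
  have hexp : cexp (π * I * s / 2) = Complex.cos (π * s / 2) + Complex.sin (π * s / 2) * I := by
    rw [Complex.cos_add_sin_I]
    ring_nf
  have hexp' : cexp (-π * I * s / 2) = Complex.cos (π * s / 2) - Complex.sin (π * s / 2) * I := by
    rw [Complex.cos_sub_sin_I]
    ring_nf
  rw [exp_mul_lerchZeta_one_sub_one_sub, hexp, hexp', lerchZeta, lerchZeta,
    completedLerchZetaEven_one_sub ha hb, completedLerchZetaOdd_one_sub]
  linear_combination
    cexp (2 * π * I * a * b) / 2 * completedLerchZetaEven a b s * hcos -
      I * cexp (2 * π * I * a * b) / 2 * completedLerchZetaOdd a b s * hsin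

theorem lerch_symmetric_pair_zero_general {lam alp : ℝ} (hlam : lam ∈ Ioo 0 1)
    (halp : alp ∈ Ioo 0 1) {F F' G : ℂ → ℂ} (hF : IsLerch lam alp F) (hF' : IsLerch alp lam F')
    (hG : IsLerch (1 - lam) (1 - alp) G) {ρ : ℂ} (hρ0 : ρ ≠ 0) (hρ1 : ρ ≠ 1) (hρ : F ρ = 0)
    (hρ' : F' (1 - (starRingEnd ℂ) ρ) = 0) : G ρ = 0 := by
  have hlam' := coe_unitAddCircle_ne_zero hlam
  have halp' := coe_unitAddCircle_ne_zero halp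
  have hneg : ((-alp : ℝ) : UnitAddCircle) ≠ 0 := by simpa using halp'
  have hsub (x : ℝ) (hx : x ∈ Ioo (0 : ℝ) 1) : 1 - x ∈ Ioo (0 : ℝ) 1 :=
    ⟨sub_pos.mpr hx.2, sub_lt_self 1 hx.1⟩
  have hA : lerchZeta lam alp ρ = 0 := (hF.eq_lerchZeta hlam' halp hρ1).symm.trans hρ
  have hC : lerchZeta (-alp) lam (1 - ρ) = 0 := by
    rw [← (hF'.conj hlam.1.le).eq_lerchZeta hneg hlam (by simpa using hρ0)]
    simp [hρ']
  have feq := lerchZeta_one_sub hlam' halp' ρ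
  rw [hG.eq_lerchZeta (coe_unitAddCircle_ne_zero (hsub lam hlam)) (hsub alp halp) hρ1]
  simpa [hA, hC, Complex.exp_ne_zero] using feq

end LerchZeta

/-- a pair of zeros of `L(lam, lam, ·)` symmetric about the critical line
gives a zero of `L(1-lam, 1-lam, ·)`. -/
theorem lerch_symmetric_pair_zero (lam : ℝ) (hlam0 : 0 < lam) (hlam1 : lam < 1)
    (F G : ℂ → ℂ) (hF : IsLerch lam lam F) (hG : IsLerch (1 - lam) (1 - lam) G)
    (ρ : ℂ) (hρim : 0 < ρ.im) (hρ : F ρ = 0) (hρ' : F (1 - (starRingEnd ℂ) ρ) = 0) :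
    G ρ = 0 := by
  have hlam : lam ∈ Set.Ioo 0 1 := ⟨hlam0, hlam1⟩
  have hρ_ne (x : ℝ) : ρ ≠ x := by
    rintro rfl
    simp at hρim
  exact lerch_symmetric_pair_zero_general hlam hlam hF hF hG (mod_cast hρ_ne 0) (mod_cast hρ_ne 1)
    hρ hρ'
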